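/- arXiv:1504.04853 — 3 statements merged into one kernel-verified Lean document; each statement's English description precedes it below -/
import Mathlib

section
/- Let R = ℚ[x,y,z], S = R[w_0,w_1,w_2], m = (x,y,z) ⊆ R, and J = (w_0 y − w_1 x, w_0 z² − w_2 x², w_1 z² − w_2 x y) ⊆ S. Then for all q ≥ 2 one has m^q S ∩ J = m^{q-2}(m² S ∩ J); moreover both sides equal m^{q-1}(w_0 y − w_1 x)S + m^{q-2}(w_0 z² − w_2 x², w_1 z² − w_2 x y)S. -/
open MvPolynomial

/-!
Give `R[x, y, z, w₀, w₁, w₂]` the grading in which `x, y, z` have degree `1` and `w₀, w₁, w₂` have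
degree `0`. Then `𝔪ⁿ` consists of the polynomials without components of degree below `n`, and the
generators of `J` are homogeneous of degrees `1, 2, 2`. Hence the component of degree `k` of an
element `∑ aᵢ gᵢ` of `J` is `∑ (aᵢ)_{k - deg gᵢ} gᵢ`, which puts it in `∑ 𝔪^{k - deg gᵢ} gᵢ`. The
Artin–Rees equality follows by multiplying this description of `𝔪² ∩ J` by `𝔪^{q - 2}`.
-/

section GradedRing

open GradedRing HomogeneousIdeal

variable {ι σ A : Type*} [CommSemiring A] [SetLike σ A] [AddSubmonoidClass σ A]
variable {𝒜 : ℕ → σ} [GradedRing 𝒜]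

lemma proj_mul_eq_zero_of_lt {a b : A} {m n k : ℕ} (ha : ∀ i < m, proj 𝒜 i a = 0)
    (hb : ∀ j < n, proj 𝒜 j b = 0) (hk : k < m + n) : proj 𝒜 k (a * b) = 0 := by
  classical
  rw [proj_apply, DirectSum.decompose_mul, DirectSum.coe_mul_apply]
  refine Finset.sum_eq_zero fun ⟨i, j⟩ hij ↦ ?_
  have hsum : i + j = k := (Finset.mem_filter.mp hij).2
  obtain hi | hj : i < m ∨ j < n := by lia
  · rw [← proj_apply, ha i hi, zero_mul]
  · rw [← proj_apply 𝒜 j, hb j hj, mul_zero]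

lemma proj_eq_zero_of_mem_pow {M : Ideal A} (hM : M ≤ (irrelevant 𝒜).toIdeal) {n k : ℕ} {a : A}
    (ha : a ∈ M ^ n) (hk : k < n) : proj 𝒜 k a = 0 := by
  induction n generalizing a k with
  | zero => exact absurd hk k.not_lt_zero
  | succ n ih =>
    rw [pow_succ] at ha
    induction ha using Submodule.mul_induction_on' with
    | mem_mul_mem b hb c hc =>
      refine proj_mul_eq_zero_of_lt (fun i hi ↦ ih hb hi) (fun j hj ↦ ?_) hk
      rw [Nat.lt_one_iff.mp hj]
      exact (mem_irrelevant_iff 𝒜 c).mp (hM hc)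
    | add b _ c _ hb hc => rw [map_add, hb, hc, add_zero]

lemma mem_of_forall_proj_mem {I : Ideal A} {a : A} (h : ∀ k, proj 𝒜 k a ∈ I) : a ∈ I := by
  classical
  rw [← DirectSum.sum_support_decompose 𝒜 a]
  exact sum_mem fun k _ ↦ h k

variable {M : Ideal A} {g : ι → A} {d : ι → ℕ}

lemma proj_mem_iSup_pow_mul_span (h𝒜 : ∀ n, ∀ a ∈ 𝒜 n, a ∈ M ^ n) (hg : ∀ i, g i ∈ 𝒜 (d i))
    {f : A} (hf : f ∈ Ideal.span (Set.range g)) (k : ℕ) :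
    proj 𝒜 k f ∈ ⨆ i, M ^ (k - d i) * Ideal.span {g i} := by
  induction hf using Submodule.closure_induction with
  | zero => rw [map_zero]; exact zero_mem _
  | add a b _ _ ha hb => rw [map_add]; exact add_mem ha hb
  | smul_mem a b hb =>
    obtain ⟨i, rfl⟩ := hb
    rw [smul_eq_mul, proj_apply, DirectSum.coe_decompose_mul_of_right_mem 𝒜 k (hg i)]
    split_ifs
    · exact Ideal.mem_iSup_of_mem i (Ideal.mul_mem_mul (h𝒜 _ _ (SetLike.coe_mem _))
        (Ideal.mem_span_singleton_self _))
    · exact zero_mem _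

/- The exponents use truncated subtraction: a generator of degree at least `q` contributes the
whole ideal `(g i)`. -/
theorem pow_inf_span_range_eq_iSup (hM : M ≤ (irrelevant 𝒜).toIdeal)
    (h𝒜 : ∀ n, ∀ a ∈ 𝒜 n, a ∈ M ^ n) (hg : ∀ i, g i ∈ 𝒜 (d i)) (q : ℕ) :
    M ^ q ⊓ Ideal.span (Set.range g) = ⨆ i, M ^ (q - d i) * Ideal.span {g i} := by
  apply le_antisymm
  · rintro f ⟨hfM, hfg⟩
    refine mem_of_forall_proj_mem (𝒜 := 𝒜) fun k ↦ ?_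
    obtain hk | hk := lt_or_ge k q
    · rw [proj_eq_zero_of_mem_pow hM hfM hk]
      exact zero_mem _
    · have hle (i : ι) : M ^ (k - d i) ≤ M ^ (q - d i) := Ideal.pow_le_pow_right (by lia)
      exact iSup_mono (fun i ↦ Ideal.mul_mono_left (hle i)) (proj_mem_iSup_pow_mul_span h𝒜 hg hfg k)
  · refine iSup_le fun i ↦ le_inf ?_ ?_
    · have hgi : Ideal.span {g i} ≤ M ^ d i :=
        (Ideal.span_singleton_le_iff_mem _).mpr (h𝒜 _ _ (hg i))
      calc M ^ (q - d i) * Ideal.span {g i} ≤ M ^ (q - d i) * M ^ d i := Ideal.mul_mono_right hgi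
        _ = M ^ (q - d i + d i) := (pow_add ..).symm
        _ ≤ M ^ q := Ideal.pow_le_pow_right (by lia)
    · exact Ideal.mul_le_right.trans (Ideal.span_mono (Set.singleton_subset_iff.mpr ⟨i, rfl⟩))

theorem pow_inf_span_range_eq_pow_mul (hM : M ≤ (irrelevant 𝒜).toIdeal)
    (h𝒜 : ∀ n, ∀ a ∈ 𝒜 n, a ∈ M ^ n) (hg : ∀ i, g i ∈ 𝒜 (d i)) {k q : ℕ} (hd : ∀ i, d i ≤ k)
    (hkq : k ≤ q) :
    M ^ q ⊓ Ideal.span (Set.range g) = M ^ (q - k) * (M ^ k ⊓ Ideal.span (Set.range g)) := by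
  have hexp (i : ι) : q - d i = q - k + (k - d i) := by have := hd i; lia
  simp only [pow_inf_span_range_eq_iSup hM h𝒜 hg, Ideal.mul_iSup, ← mul_assoc, ← pow_add, hexp]

end GradedRing

section MvPolynomial

variable {σ R : Type*} [CommSemiring R]

lemma mem_pow_of_isWeightedHomogeneous {w : σ → ℕ} {M : Ideal (MvPolynomial σ R)}
    (hX : ∀ i, X i ∈ M ^ w i) {n : ℕ} {p : MvPolynomial σ R} (hp : IsWeightedHomogeneous w p n) :
    p ∈ M ^ n := by
  rw [p.as_sum]
  refine sum_mem fun d hd ↦ ?_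
  rw [← hp (mem_support_iff.mp hd), monomial_eq, Finsupp.weight_apply, Finsupp.sum,
    ← Finset.prod_pow_eq_pow_sum]
  refine Ideal.mul_mem_left _ _ (Ideal.prod_mem_prod fun i _ ↦ ?_)
  rw [smul_eq_mul, mul_comm, pow_mul]
  exact Ideal.pow_mem_pow (hX i) _

end MvPolynomial

section Example

variable (R : Type*) [CommRing R]

/-- The weight on the variables `x, y, z, w₀, w₁, w₂` for which weighted homogeneity of degree `n`
means homogeneity of degree `n` in `x, y, z`. -/
def xyzWeight : Fin 6 → ℕ := ![1, 1, 1, 0, 0, 0]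

/-- The generators `w₀y - w₁x`, `w₀z² - w₂x²`, `w₁z² - w₂xy` of the defining ideal of the Rees
algebra of `(x², xy, z²)`. -/
noncomputable def reesGenerator : Fin 3 → MvPolynomial (Fin 6) R :=
  ![X 3 * X 1 - X 4 * X 0, X 3 * X 2 ^ 2 - X 5 * X 0 ^ 2, X 4 * X 2 ^ 2 - X 5 * X 0 * X 1]

lemma isWeightedHomogeneous_reesGenerator (i : Fin 3) :
    IsWeightedHomogeneous xyzWeight (reesGenerator R i) (![1, 2, 2] i) := by
  have hX (i : Fin 6) := isWeightedHomogeneous_X R xyzWeight i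
  fin_cases i
  · exact ((hX 3).mul (hX 1)).sub ((hX 4).mul (hX 0))
  · exact ((hX 3).mul ((hX 2).pow 2)).sub ((hX 5).mul ((hX 0).pow 2))
  · exact ((hX 4).mul ((hX 2).pow 2)).sub (((hX 5).mul (hX 0)).mul (hX 1))

lemma X_mem_span_xyz_pow_xyzWeight (i : Fin 6) :
    (X i : MvPolynomial (Fin 6) R) ∈ Ideal.span {X 0, X 1, X 2} ^ xyzWeight i := by
  have hspan := Ideal.subset_span (s := ({X 0, X 1, X 2} : Set (MvPolynomial (Fin 6) R)))
  simp only [Set.insert_subset_iff, Set.singleton_subset_iff, SetLike.mem_coe] at hspan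
  fin_cases i <;> simp [xyzWeight, hspan]

attribute [local instance] weightedGradedAlgebra

lemma span_xyz_le_irrelevant :
    (Ideal.span {X 0, X 1, X 2} : Ideal (MvPolynomial (Fin 6) R)) ≤
      (HomogeneousIdeal.irrelevant (weightedHomogeneousSubmodule R xyzWeight)).toIdeal := by
  rw [Ideal.span_le]
  rintro _ (rfl | rfl | rfl) <;>
    exact HomogeneousIdeal.mem_irrelevant_of_mem _ one_pos (isWeightedHomogeneous_X R xyzWeight _)

variable {R}

theorem artinRees_ideal_example_general
    (x y z w₀ w₁ w₂ : MvPolynomial (Fin 6) R)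
    (hx : x = X 0) (hy : y = X 1) (hz : z = X 2)
    (hw₀ : w₀ = X 3) (hw₁ : w₁ = X 4) (hw₂ : w₂ = X 5)
    (mS J : Ideal (MvPolynomial (Fin 6) R))
    (hmS : mS = Ideal.span {x, y, z})
    (hJ : J = Ideal.span {w₀ * y - w₁ * x, w₀ * z ^ 2 - w₂ * x ^ 2, w₁ * z ^ 2 - w₂ * x * y}) :
    ∀ q : ℕ, 2 ≤ q →
      mS ^ q ⊓ J = mS ^ (q - 2) * (mS ^ 2 ⊓ J) ∧
      mS ^ q ⊓ J =
        mS ^ (q - 1) * Ideal.span {w₀ * y - w₁ * x} +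
          mS ^ (q - 2) * Ideal.span {w₀ * z ^ 2 - w₂ * x ^ 2, w₁ * z ^ 2 - w₂ * x * y} := by
  subst hx hy hz hw₀ hw₁ hw₂ hmS
  intro q hq
  have hJ' : J = Ideal.span (Set.range (reesGenerator R)) := by
    rw [hJ, reesGenerator, Matrix.range_cons, Matrix.range_cons_cons_empty, Set.singleton_union]
  have hpow (n : ℕ) (p) (hp : p ∈ weightedHomogeneousSubmodule R xyzWeight n) :=
    mem_pow_of_isWeightedHomogeneous (X_mem_span_xyz_pow_xyzWeight R) hp
  have hgen := isWeightedHomogeneous_reesGenerator R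
  rw [hJ']
  refine ⟨pow_inf_span_range_eq_pow_mul (span_xyz_le_irrelevant R) hpow hgen (by decide) hq, ?_⟩
  rw [pow_inf_span_range_eq_iSup (span_xyz_le_irrelevant R) hpow hgen, ← Finset.sup_univ_eq_iSup,
    Ideal.span_insert (_ - _), Ideal.mul_sup]
  simp [Fin.univ_succ, reesGenerator]

end Example

/-- in `S = ℚ[x,y,z,w₀,w₁,w₂]` with `m S = (x,y,z)` and
`J = (w₀y − w₁x, w₀z² − w₂x², w₁z² − w₂xy)`, for all `q ≥ 2` one has
`mᵠS ∩ J = m^{q-2}(m²S ∩ J)`, and both sides equal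
`m^{q-1}(w₀y − w₁x)S + m^{q-2}(w₀z² − w₂x², w₁z² − w₂xy)S`.
Here `x = X 0, y = X 1, z = X 2, w₀ = X 3, w₁ = X 4, w₂ = X 5`. -/
theorem artinRees_ideal_example
    (x y z w₀ w₁ w₂ : MvPolynomial (Fin 6) ℚ)
    (hx : x = X 0) (hy : y = X 1) (hz : z = X 2)
    (hw₀ : w₀ = X 3) (hw₁ : w₁ = X 4) (hw₂ : w₂ = X 5)
    (mS J : Ideal (MvPolynomial (Fin 6) ℚ))
    (hmS : mS = Ideal.span {x, y, z})
    (hJ : J = Ideal.span {w₀ * y - w₁ * x, w₀ * z ^ 2 - w₂ * x ^ 2, w₁ * z ^ 2 - w₂ * x * y}) :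
    ∀ q : ℕ, 2 ≤ q →
      mS ^ q ⊓ J = mS ^ (q - 2) * (mS ^ 2 ⊓ J) ∧
      mS ^ q ⊓ J =
        mS ^ (q - 1) * Ideal.span {w₀ * y - w₁ * x} +
          mS ^ (q - 2) * Ideal.span {w₀ * z ^ 2 - w₂ * x ^ 2, w₁ * z ^ 2 - w₂ * x * y} :=
  artinRees_ideal_example_general x y z w₀ w₁ w₂ hx hy hz hw₀ hw₁ hw₂ mS J hmS hJ
end

section
/- Let R = ℚ[x,y,z], S = R[w_0,w_1,w_2], m = (x,y,z) ⊆ R, and let M_2 ⊆ G = S³ be the submodule generated by the two elements (w_2 x, −w_1, w_0) and (−z², y, −x). Then for all q ≥ 1 one has m^q G ∩ M_2 = m^{q-1}(m G ∩ M_2); moreover both sides equal m^q·(w_2 x, −w_1, w_0)·S + m^{q-1}·(−z², y, −x)·S. -/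
open MvPolynomial

/-! Write `u = (w₂x, −w₁, w₀)` and `v = (−z², y, −x)`. Up to sign, the minor of `u, v` on the last
two coordinates is `δ = w₀y − w₁x`, a nonzero form of degree one in `x, y, z`. If
`a u + b v ∈ m^q G`, Cramer's rule expresses `a δ` and `b δ` through coordinates in `m^q`; since
`x, y ∈ m`, this gives `a δ ∈ m^(q+1)` and `b δ ∈ m^q`. The order along `m` (weight one on `x, y, z`
and zero on the `wᵢ`) is additive on products, so dividing by `δ` costs exactly one power of `m`:
`a ∈ m^q` and `b ∈ m^(q-1)`. -/

section IdealSmulTop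

variable {A : Type*} [CommSemiring A] {I : Ideal A}

theorem dual_apply_mem_of_mem_smul_top {G : Type*} [AddCommMonoid G] [Module A G]
    (φ : Module.Dual A G) {g : G} (hg : g ∈ I • (⊤ : Submodule A G)) : φ g ∈ I := by
  simpa using Submodule.smul_top_le_comap_smul_top I φ hg

theorem mem_smul_top_of_forall_apply_mem {ι : Type*} [Finite ι] {v : ι → A} (hv : ∀ i, v i ∈ I) :
    v ∈ I • (⊤ : Submodule A (ι → A)) := by
  classical
  cases nonempty_fintype ι
  rw [pi_eq_sum_univ v]
  exact sum_mem fun i _ => Submodule.smul_mem_smul (hv i) trivial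

end IdealSmulTop

section SpanPair

variable {A G : Type*} [CommRing A] [AddCommGroup G] [Module A G] {I : Ideal A} {u v : G}

theorem mem_pow_of_smul_add_smul_mem_pow_smul_top (φ ψ : Module.Dual A G)
    (hv : v ∈ I • (⊤ : Submodule A G))
    (hcancel : ∀ n f, f * (φ u * ψ v - ψ u * φ v) ∈ I ^ (n + 1) → f ∈ I ^ n) {n : ℕ} {a b : A}
    (hab : a • u + b • v ∈ I ^ (n + 1) • (⊤ : Submodule A G)) :
    a ∈ I ^ (n + 1) ∧ b ∈ I ^ n := by
  have hφ : a * φ u + b * φ v ∈ I ^ (n + 1) := by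
    simpa using dual_apply_mem_of_mem_smul_top φ hab
  have hψ : a * ψ u + b * ψ v ∈ I ^ (n + 1) := by
    simpa using dual_apply_mem_of_mem_smul_top ψ hab
  constructor
  · have cramer : a * (φ u * ψ v - ψ u * φ v) =
        (a * φ u + b * φ v) * ψ v - (a * ψ u + b * ψ v) * φ v := by ring
    apply hcancel
    rw [cramer, pow_succ]
    exact sub_mem (Ideal.mul_mem_mul hφ (dual_apply_mem_of_mem_smul_top ψ hv))
      (Ideal.mul_mem_mul hψ (dual_apply_mem_of_mem_smul_top φ hv))
  · have cramer : b * (φ u * ψ v - ψ u * φ v) =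
        (a * ψ u + b * ψ v) * φ u - (a * φ u + b * φ v) * ψ u := by ring
    apply hcancel
    rw [cramer]
    exact sub_mem (Ideal.mul_mem_right _ _ hψ) (Ideal.mul_mem_right _ _ hφ)

theorem pow_succ_smul_top_inf_span_pair (φ ψ : Module.Dual A G)
    (hv : v ∈ I • (⊤ : Submodule A G))
    (hcancel : ∀ n f, f * (φ u * ψ v - ψ u * φ v) ∈ I ^ (n + 1) → f ∈ I ^ n) (n : ℕ) :
    I ^ (n + 1) • (⊤ : Submodule A G) ⊓ Submodule.span A {u, v} =
      I ^ (n + 1) • Submodule.span A {u} ⊔ I ^ n • Submodule.span A {v} := by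
  apply le_antisymm
  · rintro g ⟨hg, hspan⟩
    obtain ⟨a, b, rfl⟩ := Submodule.mem_span_pair.1 hspan
    obtain ⟨ha, hb⟩ := mem_pow_of_smul_add_smul_mem_pow_smul_top φ ψ hv hcancel hg
    exact Submodule.add_mem_sup
      (Submodule.smul_mem_smul ha (Submodule.mem_span_singleton_self u))
      (Submodule.smul_mem_smul hb (Submodule.mem_span_singleton_self v))
  · have hv_pow : I ^ n • Submodule.span A {v} ≤ I ^ (n + 1) • (⊤ : Submodule A G) := by
      rw [pow_succ, Submodule.mul_smul]
      exact smul_mono_right _ ((Submodule.span_singleton_le_iff_mem _ _).2 hv)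
    exact sup_le
      (le_inf (smul_mono_right _ le_top)
        (Submodule.smul_le_right.trans (Submodule.span_mono (by simp))))
      (le_inf hv_pow (Submodule.smul_le_right.trans (Submodule.span_mono (by simp))))

theorem pow_succ_smul_top_inf_span_pair_eq_pow_smul (φ ψ : Module.Dual A G)
    (hv : v ∈ I • (⊤ : Submodule A G))
    (hcancel : ∀ n f, f * (φ u * ψ v - ψ u * φ v) ∈ I ^ (n + 1) → f ∈ I ^ n) (n : ℕ) :
    I ^ (n + 1) • (⊤ : Submodule A G) ⊓ Submodule.span A {u, v} =
      I ^ n • (I • (⊤ : Submodule A G) ⊓ Submodule.span A {u, v}) := by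
  have hone : I • (⊤ : Submodule A G) ⊓ Submodule.span A {u, v} =
      I • Submodule.span A {u} ⊔ Submodule.span A {v} := by
    simpa using pow_succ_smul_top_inf_span_pair φ ψ hv hcancel 0
  rw [pow_succ_smul_top_inf_span_pair φ ψ hv hcancel, hone, Submodule.smul_sup, pow_succ,
    Submodule.mul_smul]

end SpanPair

section VariableIdeal

variable {σ R : Type*} [CommSemiring R] {s : Set σ}

theorem monomial_mem_span_X_image_pow_weight (d : σ →₀ ℕ) (r : R) :
    monomial d r ∈
      Ideal.span (X '' s : Set (MvPolynomial σ R)) ^ Finsupp.weight (s.indicator 1) d := by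
  rw [monomial_eq, Finsupp.weight_apply, Finsupp.sum, ← Finset.prod_pow_eq_pow_sum]
  refine Ideal.mul_mem_left _ _ (Ideal.prod_mem_prod fun i _ => ?_)
  by_cases hi : i ∈ s
  · simpa [hi] using Ideal.pow_mem_pow (Ideal.subset_span (Set.mem_image_of_mem X hi)) (d i)
  · simp [hi]

theorem mem_span_X_image_pow_of_le_weightedOrder {n : ℕ} {f : MvPolynomial σ R}
    (hf : (n : ℕ∞) ≤ (f : MvPowerSeries σ R).weightedOrder (s.indicator 1)) :
    f ∈ Ideal.span (X '' s : Set (MvPolynomial σ R)) ^ n := by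
  rw [f.as_sum]
  refine sum_mem fun d hd => ?_
  have hnd : n ≤ Finsupp.weight (s.indicator 1) d := by
    refine Nat.cast_le.1 (hf.trans (MvPowerSeries.weightedOrder_le _ ?_))
    rwa [coeff_coe, ← mem_support_iff]
  exact Ideal.pow_le_pow_right hnd (monomial_mem_span_X_image_pow_weight d _)

theorem one_le_weightedOrder_of_mem_span_X_image {f : MvPolynomial σ R}
    (hf : f ∈ Ideal.span (X '' s : Set (MvPolynomial σ R))) :
    1 ≤ (f : MvPowerSeries σ R).weightedOrder (s.indicator 1) := by
  refine MvPowerSeries.le_weightedOrder _ fun d hd => ?_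
  rw [coeff_coe]
  by_contra hfd
  obtain ⟨i, his, hi⟩ := mem_ideal_span_X_image.1 hf d (mem_support_iff.2 hfd)
  have hle := Finsupp.le_weight (s.indicator 1) (s := i) (by simp [his]) d
  have : Finsupp.weight (s.indicator 1) d < 1 := by exact_mod_cast hd
  omega

theorem le_weightedOrder_of_mem_span_X_image_pow {n : ℕ} {f : MvPolynomial σ R}
    (hf : f ∈ Ideal.span (X '' s : Set (MvPolynomial σ R)) ^ n) :
    (n : ℕ∞) ≤ (f : MvPowerSeries σ R).weightedOrder (s.indicator 1) := by
  induction n generalizing f with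
  | zero => simp
  | succ n ih =>
    rw [pow_succ] at hf
    induction hf using Submodule.mul_induction_on' with
    | mem_mul_mem g hg h hh =>
      rw [coe_mul, Nat.cast_succ]
      exact (add_le_add (ih hg) (one_le_weightedOrder_of_mem_span_X_image hh)).trans
        (MvPowerSeries.le_weightedOrder_mul _)
    | add g _ h _ hg hh =>
      rw [coe_add]
      exact (le_min hg hh).trans (MvPowerSeries.min_weightedOrder_le_add _)

theorem mem_span_X_image_pow_of_mul_mem_pow_add [NoZeroDivisors R] {δ : MvPolynomial σ R} {k : ℕ}
    (hδ : (δ : MvPowerSeries σ R).weightedOrder (s.indicator 1) ≤ k) {n : ℕ} {f : MvPolynomial σ R}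
    (hf : f * δ ∈ Ideal.span (X '' s : Set (MvPolynomial σ R)) ^ (n + k)) :
    f ∈ Ideal.span (X '' s : Set (MvPolynomial σ R)) ^ n := by
  apply mem_span_X_image_pow_of_le_weightedOrder
  rw [← ENat.add_le_add_iff_right (ENat.natCast_ne_top k)]
  calc (n + k : ℕ∞)
    _ ≤ ((f * δ : MvPolynomial σ R) : MvPowerSeries σ R).weightedOrder (s.indicator 1) :=
      mod_cast le_weightedOrder_of_mem_span_X_image_pow hf
    _ = (f : MvPowerSeries σ R).weightedOrder (s.indicator 1) +
        (δ : MvPowerSeries σ R).weightedOrder (s.indicator 1) := by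
      rw [coe_mul, MvPowerSeries.weightedOrder_mul]
    _ ≤ (f : MvPowerSeries σ R).weightedOrder (s.indicator 1) + k := by gcongr

theorem weightedOrder_X_mul_X_add_X_mul_le_one [Nontrivial R] {i j k : σ} (hij : i ≠ j)
    (hik : i ≠ k) (hk : k ∉ s) (b : MvPolynomial σ R) :
    ((X j * X k + X i * b : MvPolynomial σ R) : MvPowerSeries σ R).weightedOrder
      (s.indicator 1) ≤ 1 := by
  classical
  have hcoeff : coeff (Finsupp.single j 1 + Finsupp.single k 1) (X j * X k + X i * b) = 1 := by
    simp [coeff_X_mul', hij, hik]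
  refine (MvPowerSeries.weightedOrder_le _ (d := Finsupp.single j 1 + Finsupp.single k 1) ?_).trans
    ?_
  · rw [coeff_coe, hcoeff]
    exact one_ne_zero
  · by_cases hj : j ∈ s <;> simp [Finsupp.weight_single, hj, hk]

end VariableIdeal

theorem artinRees_syzygy_example_general {σ R : Type*} [CommRing R] [IsDomain R] {s : Set σ}
    {i j k : σ} (hi : i ∈ s) (hj : j ∈ s) (hij : i ≠ j) (hk : k ∉ s) {m : Ideal (MvPolynomial σ R)}
    (hm : m = Ideal.span (X '' s)) (a b : MvPolynomial σ R) {c : MvPolynomial σ R} (hc : c ∈ m) :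
    ∀ q : ℕ, 1 ≤ q →
      m ^ q • (⊤ : Submodule (MvPolynomial σ R) (Fin 3 → MvPolynomial σ R)) ⊓
          Submodule.span (MvPolynomial σ R) {![a, b, X k], ![c, X j, -X i]} =
        m ^ (q - 1) •
          (m • (⊤ : Submodule (MvPolynomial σ R) (Fin 3 → MvPolynomial σ R)) ⊓
            Submodule.span (MvPolynomial σ R) {![a, b, X k], ![c, X j, -X i]}) ∧
      m ^ q • (⊤ : Submodule (MvPolynomial σ R) (Fin 3 → MvPolynomial σ R)) ⊓
          Submodule.span (MvPolynomial σ R) {![a, b, X k], ![c, X j, -X i]} =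
        m ^ q • Submodule.span (MvPolynomial σ R) {![a, b, X k]} +
          m ^ (q - 1) • Submodule.span (MvPolynomial σ R) {![c, X j, -X i]} := by
  have hX : ∀ l ∈ s, X l ∈ m := fun l hl => hm ▸ Ideal.subset_span (Set.mem_image_of_mem X hl)
  have hv : ![c, X j, -X i] ∈
      m • (⊤ : Submodule (MvPolynomial σ R) (Fin 3 → MvPolynomial σ R)) :=
    mem_smul_top_of_forall_apply_mem <| by simp [Fin.forall_fin_succ, hc, hX i hi, hX j hj]
  let φ : Module.Dual (MvPolynomial σ R) (Fin 3 → MvPolynomial σ R) := LinearMap.proj 2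
  let ψ : Module.Dual (MvPolynomial σ R) (Fin 3 → MvPolynomial σ R) := LinearMap.proj 1
  have hminor : φ ![a, b, X k] * ψ ![c, X j, -X i] - ψ ![a, b, X k] * φ ![c, X j, -X i] =
      X j * X k + X i * b := by
    simp only [φ, ψ, LinearMap.proj_apply, Matrix.cons_val]
    ring
  have hcancel (n : ℕ) (f : MvPolynomial σ R)
      (hf : f * (φ ![a, b, X k] * ψ ![c, X j, -X i] - ψ ![a, b, X k] * φ ![c, X j, -X i]) ∈
        m ^ (n + 1)) : f ∈ m ^ n := by
    subst hm
    rw [hminor] at hf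
    exact mem_span_X_image_pow_of_mul_mem_pow_add (weightedOrder_X_mul_X_add_X_mul_le_one hij
      (ne_of_mem_of_not_mem hi hk) hk b) hf
  intro q hq
  obtain ⟨n, rfl⟩ := Nat.exists_eq_add_of_le' hq
  exact ⟨pow_succ_smul_top_inf_span_pair_eq_pow_smul φ ψ hv hcancel n,
    pow_succ_smul_top_inf_span_pair φ ψ hv hcancel n⟩

/-- in `S = ℚ[x,y,z,w₀,w₁,w₂]` with `m = (x,y,z)`, `G = S³` and
`M₂ ⊆ G` the submodule generated by `(w₂x, −w₁, w₀)` and `(−z², y, −x)`, for all `q ≥ 1`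
one has `mᵠG ∩ M₂ = m^{q-1}(mG ∩ M₂)`, and both sides equal
`mᵠ·(w₂x, −w₁, w₀)·S + m^{q-1}·(−z², y, −x)·S`. -/
theorem artinRees_syzygy_example
    (x y z w₀ w₁ w₂ : MvPolynomial (Fin 6) ℚ)
    (hx : x = X 0) (hy : y = X 1) (hz : z = X 2)
    (hw₀ : w₀ = X 3) (hw₁ : w₁ = X 4) (hw₂ : w₂ = X 5)
    (mS : Ideal (MvPolynomial (Fin 6) ℚ))
    (hmS : mS = Ideal.span {x, y, z})
    (M₂ : Submodule (MvPolynomial (Fin 6) ℚ) (Fin 3 → MvPolynomial (Fin 6) ℚ))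
    (hM₂ : M₂ = Submodule.span (MvPolynomial (Fin 6) ℚ)
      {![w₂ * x, -w₁, w₀], ![-z ^ 2, y, -x]}) :
    ∀ q : ℕ, 1 ≤ q →
      mS ^ q • (⊤ : Submodule (MvPolynomial (Fin 6) ℚ) (Fin 3 → MvPolynomial (Fin 6) ℚ)) ⊓ M₂ =
        mS ^ (q - 1) •
          (mS • (⊤ : Submodule (MvPolynomial (Fin 6) ℚ) (Fin 3 → MvPolynomial (Fin 6) ℚ)) ⊓ M₂) ∧
      mS ^ q • (⊤ : Submodule (MvPolynomial (Fin 6) ℚ) (Fin 3 → MvPolynomial (Fin 6) ℚ)) ⊓ M₂ =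
        mS ^ q • Submodule.span (MvPolynomial (Fin 6) ℚ) {![w₂ * x, -w₁, w₀]} +
          mS ^ (q - 1) • Submodule.span (MvPolynomial (Fin 6) ℚ) {![-z ^ 2, y, -x]} := by
  subst hx hy hz hw₀ hw₁ hw₂ hM₂
  exact artinRees_syzygy_example_general (s := {0, 1, 2}) (by simp) (by simp) (by decide)
    (by decide) (by simp [hmS, Set.image_insert_eq]) _ _
    (neg_mem (Ideal.pow_mem_of_mem _ (hmS ▸ Ideal.subset_span (by simp)) 2 two_pos))
end

section
/- Let R = ℚ[x,y,z] and I = (x², xy, z²) ⊆ R. Then the Rees algebra Rees(I) = R ⊕ I ⊕ I² ⊕ ... (graded with deg I^n = n) is isomorphic as a graded R-algebra to S/(w_0 y − w_1 x, w_0 z² − w_2 x², w_1 z² − w_2 x y), where S = R[w_0,w_1,w_2] with deg w_i = 1, via the surjection sending w_0 ↦ x², w_1 ↦ xy, w_2 ↦ z². -/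
open MvPolynomial

/-!
Both sides of `ψ` have `K`-bases of monomials, and `ψ` sends monomials to monomials, so its kernel
is spanned by the binomials `μ - μ'` with `ψ μ = ψ μ'`. It remains to rewrite `μ` into `μ'`
using the three relations. If `w₂` occurs `s` times more in `μ'` than in `μ`, then `μ` is divisible
by `z²ˢ` and by a monomial of degree `s` in `w₀, w₁`, and the relations with `z²` on the left turn
`s` of these factors into `w₂`. Once the exponents of `w₂` agree, `μ` and `μ'` differ by a power of
`w₀y` traded for the same power of `w₁x`.
-/

section KernelOfBasis

variable {K M N ι κ : Type*} [Ring K] [AddCommGroup M] [Module K M] [AddCommGroup N] [Module K N]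

theorem ker_eq_span_sub_of_basis (b : Module.Basis ι K M) {v : κ → N} (hv : LinearIndependent K v)
    (f : ι → κ) {φ : M →ₗ[K] N} (hφ : ∀ i, φ (b i) = v (f i)) :
    LinearMap.ker φ = Submodule.span K {m | ∃ i j, f i = f j ∧ b i - b j = m} := by
  apply le_antisymm
  · set P := Submodule.span K {m | ∃ i j, f i = f j ∧ b i - b j = m}
    have factors : (fun i => P.mkQ (b i)).FactorsThrough f := fun i j hij =>
      (Submodule.Quotient.eq P).2 (Submodule.subset_span ⟨i, j, hij, rfl⟩)
    let g : κ → M ⧸ P := Function.extend f (fun i => P.mkQ (b i)) 0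
    have mkQ_eq : P.mkQ = Finsupp.linearCombination K g ∘ₗ Finsupp.lmapDomain K K f ∘ₗ b.repr :=
      b.ext fun i => by simpa [g] using (factors.extend_apply 0 i).symm
    have φ_eq : φ = Finsupp.linearCombination K v ∘ₗ Finsupp.lmapDomain K K f ∘ₗ b.repr :=
      b.ext fun i => by simp [hφ]
    intro m hm
    have mapDomain_eq_zero : Finsupp.lmapDomain K K f (b.repr m) = 0 :=
      hv (by simpa [φ_eq] using hm)
    rw [← Submodule.ker_mkQ P, LinearMap.mem_ker, mkQ_eq]
    simp [mapDomain_eq_zero]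
  · rw [Submodule.span_le]
    rintro _ ⟨i, j, hij, rfl⟩
    simp [hφ, hij]

end KernelOfBasis

section ReesMap

variable {R ι : Type*} [CommSemiring R] (a : ι → R)

/-- The `R`-algebra map `R[wᵢ] → R[t]`, `wᵢ ↦ aᵢ t`, whose image is the Rees algebra of the ideal
generated by the `aᵢ`. -/
noncomputable def reesMap : MvPolynomial ι R →ₐ[R] Polynomial R :=
  aeval fun i => Polynomial.C (a i) * Polynomial.X

theorem reesMap_monomial (d : ι →₀ ℕ) (r : R) :
    reesMap a (monomial d r) = Polynomial.monomial d.degree (eval a (monomial d r)) := by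
  rw [reesMap, aeval_monomial, eval_monomial, ← Polynomial.C_mul_X_pow_eq_monomial]
  simp [mul_pow, Finsupp.prod, Finset.prod_mul_distrib, Finset.prod_pow_eq_pow_sum,
    Finsupp.degree_apply, mul_assoc]

theorem reesMap_of_isHomogeneous {n : ℕ} {f : MvPolynomial ι R} (hf : f.IsHomogeneous n) :
    reesMap a f = Polynomial.monomial n (eval a f) := by
  conv_lhs => rw [f.as_sum]
  conv_rhs => rw [f.as_sum]
  simp only [map_sum]
  refine Finset.sum_congr rfl fun d hd => ?_
  rw [reesMap_monomial, Finsupp.degree_apply, ← hf.degree_eq_sum_deg_support hd]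

theorem map_reesMap_homogeneousSubmodule (n : ℕ) :
    (homogeneousSubmodule ι R n).map (reesMap a).toLinearMap =
      Submodule.map (Polynomial.monomial n) (Ideal.span (Set.range a) ^ n) := by
  ext p
  simp only [Submodule.mem_map, mem_homogeneousSubmodule,
    Ideal.mem_span_pow_iff_exists_isHomogeneous, AlgHom.toLinearMap_apply]
  constructor
  · rintro ⟨f, hf, rfl⟩
    exact ⟨_, ⟨f, hf, rfl⟩, (reesMap_of_isHomogeneous a hf).symm⟩
  · rintro ⟨_, ⟨f, hf, rfl⟩, rfl⟩
    exact ⟨f, hf, reesMap_of_isHomogeneous a hf⟩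

end ReesMap

theorem range_reesMap {R ι : Type*} [CommRing R] (a : ι → R) :
    (reesMap a).range = reesAlgebra (Ideal.span (Set.range a)) := by
  rw [← adjoin_monomial_eq_reesAlgebra, Ideal.span, Submodule.map_span, Algebra.adjoin_span,
    ← Set.range_comp, reesMap, ← Algebra.adjoin_range_eq_range_aeval]
  simp only [Polynomial.C_mul_X_eq_monomial, Function.comp_def]

section MonomialIdeal

variable {σ ι : Type*}

/-- The multidegree, in the variables of `σ` and in `t`, of the image under
`reesMap fun i => monomial (e i) 1` of the monomial with exponent `p.1` in the variables of `σ` and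
exponent `p.2` in the variables `wᵢ`. -/
noncomputable def reesMultidegree (e : ι → σ →₀ ℕ) (p : (σ →₀ ℕ) × (ι →₀ ℕ)) : (σ →₀ ℕ) × ℕ :=
  (p.1 + Finsupp.linearCombination ℕ e p.2, p.2.degree)

theorem reesMap_monomial_monomial {K : Type*} [CommSemiring K] (e : ι → σ →₀ ℕ)
    (m : σ →₀ ℕ) (d : ι →₀ ℕ) :
    reesMap (fun i => monomial (e i) (1 : K)) (monomial d (monomial m 1)) =
      Polynomial.monomial d.degree (monomial (m + Finsupp.linearCombination ℕ e d) 1) := by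
  rw [reesMap_monomial, eval_monomial, Finsupp.linearCombination_apply, ← mul_one (1 : K),
    ← monomial_mul, monomial_finsupp_sum_index]
  simp [monomial_pow]

theorem ker_reesMap_monomial {K : Type*} [CommRing K] (e : ι → σ →₀ ℕ) :
    RingHom.ker (reesMap fun i => monomial (e i) (1 : K)) =
      Ideal.span {f | ∃ p q, reesMultidegree e p = reesMultidegree e q ∧
        monomial p.2 (monomial p.1 1) - monomial q.2 (monomial q.1 1) = f} := by
  let b := (basisMonomials σ K).smulTower (basisMonomials ι (MvPolynomial σ K))
  let c := (basisMonomials σ K).smulTower (Polynomial.basisMonomials (MvPolynomial σ K))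
  have b_apply (p) : b p = monomial p.2 (monomial p.1 1) := by
    simp [b, smul_monomial]
  have c_apply (p) : c p = Polynomial.monomial p.2 (monomial p.1 1) := by
    simp [c, Polynomial.smul_monomial]
  have ker_eq := ker_eq_span_sub_of_basis b c.linearIndependent (reesMultidegree e)
    (φ := (reesMap fun i => monomial (e i) (1 : K)).toLinearMap.restrictScalars K) fun p => by
      simp [b_apply, c_apply, reesMap_monomial_monomial, reesMultidegree]
  simp only [b_apply] at ker_eq
  apply le_antisymm
  · intro f hf
    exact Submodule.span_le_restrictScalars K _ _ (ker_eq.le hf)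
  · rw [Ideal.span_le]
    intro f hf
    exact ker_eq.ge (Submodule.subset_span hf)

end MonomialIdeal

section Relations

variable {Q : Type*} [CommMonoid Q] {x y z u v w : Q}

theorem pow_mul_pow_eq_of_mul_eq_mul (hxy : y * u = x * v) {a b i j a' b' i' j' : ℕ}
    (ha : a + i = a' + i') (hb : b + j = b' + j') (hi : i + j = i' + j') :
    x ^ a * y ^ b * u ^ i * v ^ j = x ^ a' * y ^ b' * u ^ i' * v ^ j' := by
  wlog hj : j ≤ j' generalizing a b i j a' b' i' j'
  · exact (this ha.symm hb.symm hi.symm (by omega)).symm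
  obtain ⟨s, rfl⟩ := Nat.exists_eq_add_of_le hj
  obtain rfl : a' = a + s := by omega
  obtain rfl : b = b' + s := by omega
  obtain rfl : i = i' + s := by omega
  calc x ^ a * y ^ (b' + s) * u ^ (i' + s) * v ^ j
      = x ^ a * y ^ b' * u ^ i' * v ^ j * (y * u) ^ s := by
        simp only [pow_add, mul_pow]; ac_rfl
    _ = x ^ (a + s) * y ^ b' * u ^ i' * v ^ (j + s) := by
        rw [hxy]; simp only [pow_add, mul_pow]; ac_rfl

theorem monomial_eq_of_relations (hxy : y * u = x * v) (hxz : z ^ 2 * u = x ^ 2 * w)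
    (hyz : z ^ 2 * v = x * y * w) {a b c i j k a' b' c' i' j' k' : ℕ}
    (ha : a + 2 * i + j = a' + 2 * i' + j') (hb : b + j = b' + j')
    (hc : c + 2 * k = c' + 2 * k') (hi : i + j + k = i' + j' + k') :
    x ^ a * y ^ b * z ^ c * u ^ i * v ^ j * w ^ k =
      x ^ a' * y ^ b' * z ^ c' * u ^ i' * v ^ j' * w ^ k' := by
  wlog hk : k ≤ k' generalizing a b c i j k a' b' c' i' j' k'
  · exact (this ha.symm hb.symm hc.symm hi.symm (by omega)).symm
  -- The surplus of `z²` is absorbed by `s` factors `u` and `t` factors `v`, in any available mix.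
  obtain ⟨s, t, i₀, j₀, rfl, rfl, rfl⟩ :
      ∃ s t i₀ j₀, i = i₀ + s ∧ j = j₀ + t ∧ k' = k + (s + t) :=
    ⟨min (k' - k) i, k' - k - min (k' - k) i, i - min (k' - k) i,
      j - (k' - k - min (k' - k) i), by omega, by omega, by omega⟩
  obtain rfl : c = c' + 2 * s + 2 * t := by omega
  calc x ^ a * y ^ b * z ^ (c' + 2 * s + 2 * t) * u ^ (i₀ + s) * v ^ (j₀ + t) * w ^ k
      = x ^ a * y ^ b * u ^ i₀ * v ^ j₀ * (z ^ 2 * u) ^ s * (z ^ 2 * v) ^ t * z ^ c' * w ^ k := by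
        simp only [pow_add, pow_mul, mul_pow]; ac_rfl
    _ = x ^ (a + 2 * s + t) * y ^ (b + t) * u ^ i₀ * v ^ j₀ * z ^ c' * w ^ (k + (s + t)) := by
        rw [hxz, hyz]; simp only [pow_add, pow_mul, mul_pow]; ac_rfl
    _ = x ^ a' * y ^ b' * u ^ i' * v ^ j' * z ^ c' * w ^ (k + (s + t)) := by
        rw [pow_mul_pow_eq_of_mul_eq_mul hxy (a' := a') (b' := b') (i' := i') (j' := j')] <;> omega
    _ = x ^ a' * y ^ b' * z ^ c' * u ^ i' * v ^ j' * w ^ (k + (s + t)) := by ac_rfl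

end Relations

/-- The ideal `(w₀y − w₁x, w₀z² − w₂x², w₁z² − w₂xy)` of `R[w₀, w₁, w₂]`, for elements `x, y, z` of
a ring `R`; it consists of relations between the generators `x², xy, z²`. -/
noncomputable def relationIdeal {R : Type*} [CommRing R] (x y z : R) :
    Ideal (MvPolynomial (Fin 3) R) :=
  Ideal.span {C y * X 0 - C x * X 1,
    C (z ^ 2) * X 0 - C (x ^ 2) * X 2,
    C (z ^ 2) * X 1 - C (x * y) * X 2}

theorem relationIdeal_le_ker_reesMap {R : Type*} [CommRing R] (x y z : R) :
    relationIdeal x y z ≤ RingHom.ker (reesMap ![x ^ 2, x * y, z ^ 2]) := by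
  rw [relationIdeal, Ideal.span_le]
  rintro f (rfl | rfl | rfl) <;>
  · simp only [reesMap, SetLike.mem_coe, RingHom.mem_ker, map_sub, map_mul, map_pow, algHom_C,
      Polynomial.algebraMap_eq, aeval_X, Matrix.cons_val]
    ring

theorem monomial_sub_mem_relationIdeal {R : Type*} [CommRing R] (x y z : R)
    {a b c i j k a' b' c' i' j' k' : ℕ}
    (ha : a + 2 * i + j = a' + 2 * i' + j') (hb : b + j = b' + j')
    (hc : c + 2 * k = c' + 2 * k') (hi : i + j + k = i' + j' + k') :
    C x ^ a * C y ^ b * C z ^ c * X 0 ^ i * X 1 ^ j * X 2 ^ k -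
      C x ^ a' * C y ^ b' * C z ^ c' * X 0 ^ i' * X 1 ^ j' * X 2 ^ k' ∈ relationIdeal x y z := by
  rw [← Ideal.Quotient.eq]
  simp only [map_mul, map_pow]
  apply monomial_eq_of_relations _ _ _ ha hb hc hi
  all_goals
    simp only [← map_mul, ← map_pow]
    exact Ideal.Quotient.eq.2 (Ideal.subset_span (by simp))

theorem monomial_monomial_fin_three {K : Type*} [CommSemiring K] (m d : Fin 3 →₀ ℕ) :
    monomial d (monomial m (1 : K)) = C (X 0) ^ m 0 * C (X 1) ^ m 1 * C (X 2) ^ m 2 *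
      X 0 ^ d 0 * X 1 ^ d 1 * X 2 ^ d 2 := by
  rw [monomial_eq, monomial_eq, Finsupp.prod_fintype _ _ (by simp),
    Finsupp.prod_fintype _ _ (by simp), Fin.prod_univ_three, Fin.prod_univ_three]
  simp only [map_mul, map_pow, map_one, one_mul, mul_assoc]

/-- The exponents of the generators `x², xy, z²` as monomials in `x = X 0`, `y = X 1`,
`z = X 2`. -/
noncomputable def generatorExponent : Fin 3 → Fin 3 →₀ ℕ :=
  ![Finsupp.single 0 2, Finsupp.single 0 1 + Finsupp.single 1 1, Finsupp.single 2 2]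

theorem monomial_generatorExponent (K : Type*) [CommSemiring K] :
    (fun i => monomial (generatorExponent i) (1 : K)) = ![X 0 ^ 2, X 0 * X 1, X 2 ^ 2] := by
  funext i
  fin_cases i <;> simp [generatorExponent, X, monomial_pow, monomial_mul]

theorem reesMultidegree_generatorExponent_eq_iff {p q : (Fin 3 →₀ ℕ) × (Fin 3 →₀ ℕ)} :
    reesMultidegree generatorExponent p = reesMultidegree generatorExponent q ↔
      p.1 0 + 2 * p.2 0 + p.2 1 = q.1 0 + 2 * q.2 0 + q.2 1 ∧
      p.1 1 + p.2 1 = q.1 1 + q.2 1 ∧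
      p.1 2 + 2 * p.2 2 = q.1 2 + 2 * q.2 2 ∧
      p.2 0 + p.2 1 + p.2 2 = q.2 0 + q.2 1 + q.2 2 := by
  have linearCombination_eq (d : Fin 3 →₀ ℕ) : Finsupp.linearCombination ℕ generatorExponent d =
      ∑ i, d i • generatorExponent i :=
    Finsupp.sum_fintype _ _ (by simp)
  simp only [reesMultidegree, linearCombination_eq]
  simp [generatorExponent, Fin.sum_univ_three, Finsupp.degree_eq_sum, DFunLike.ext_iff,
    Fin.forall_fin_succ, mul_comm, add_assoc, and_assoc]

theorem ker_reesMap_eq_relationIdeal (K : Type*) [CommRing K] :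
    RingHom.ker (reesMap ![X 0 ^ 2, X 0 * X 1, X 2 ^ 2]) =
      relationIdeal (X 0 : MvPolynomial (Fin 3) K) (X 1) (X 2) := by
  refine le_antisymm ?_ (relationIdeal_le_ker_reesMap _ _ _)
  rw [← monomial_generatorExponent, ker_reesMap_monomial, Ideal.span_le]
  rintro _ ⟨p, q, hpq, rfl⟩
  obtain ⟨hx, hy, hz, hw⟩ := reesMultidegree_generatorExponent_eq_iff.1 hpq
  rw [monomial_monomial_fin_three, monomial_monomial_fin_three]
  exact monomial_sub_mem_relationIdeal _ _ _ hx hy hz hw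

theorem reesAlgebra_presentation_example_general
    {K : Type*} [CommRing K] (x y z : MvPolynomial (Fin 3) K)
    (hx : x = X 0) (hy : y = X 1) (hz : z = X 2)
    (I : Ideal (MvPolynomial (Fin 3) K))
    (hI : I = Ideal.span {x ^ 2, x * y, z ^ 2})
    (J : Ideal (MvPolynomial (Fin 3) (MvPolynomial (Fin 3) K)))
    (hJ : J = Ideal.span
      {C y * X 0 - C x * X 1,
       C (z ^ 2) * X 0 - C (x ^ 2) * X 2,
       C (z ^ 2) * X 1 - C (x * y) * X 2})
    (ψ : MvPolynomial (Fin 3) (MvPolynomial (Fin 3) K) →ₐ[MvPolynomial (Fin 3) K]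
      Polynomial (MvPolynomial (Fin 3) K))
    (hψ : ψ = aeval ![Polynomial.C (x ^ 2) * Polynomial.X,
      Polynomial.C (x * y) * Polynomial.X, Polynomial.C (z ^ 2) * Polynomial.X]) :
    RingHom.ker (ψ : MvPolynomial (Fin 3) (MvPolynomial (Fin 3) K) →+*
        Polynomial (MvPolynomial (Fin 3) K)) = J ∧
    ψ.range = reesAlgebra I ∧
    (∀ (n : ℕ) (f : MvPolynomial (Fin 3) (MvPolynomial (Fin 3) K)),
      f ∈ homogeneousSubmodule (Fin 3) (MvPolynomial (Fin 3) K) n →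
        ψ f ∈ Submodule.map (Polynomial.monomial n) (I ^ n)) ∧
    Nonempty ((MvPolynomial (Fin 3) (MvPolynomial (Fin 3) K) ⧸ J)
      ≃ₐ[MvPolynomial (Fin 3) K] reesAlgebra I) := by
  have hψ_rees : ψ = reesMap ![x ^ 2, x * y, z ^ 2] := by
    rw [hψ, reesMap]
    congr 1
    funext i
    fin_cases i <;> rfl
  have hI_range : I = Ideal.span (Set.range ![x ^ 2, x * y, z ^ 2]) := by
    rw [hI]
    simp only [Matrix.range_cons, Matrix.range_empty, Set.union_empty, Set.singleton_union]
  have hker : RingHom.ker ψ = J := by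
    rw [hψ_rees, hJ, hx, hy, hz]
    exact ker_reesMap_eq_relationIdeal K
  have hrange : ψ.range = reesAlgebra I := by
    rw [hψ_rees, hI_range, range_reesMap]
  refine ⟨hker, hrange, fun n f hf => ?_, ⟨?_⟩⟩
  · rw [hψ_rees, hI_range, ← map_reesMap_homogeneousSubmodule]
    exact Submodule.mem_map_of_mem hf
  · exact (Ideal.quotientEquivAlgOfEq _ hker.symm).trans
      ((Ideal.quotientKerEquivRange ψ).trans (Subalgebra.equivOfEq _ _ hrange))

/-- for `R = ℚ[x,y,z]` and `I = (x², xy, z²)`, the Rees algebra of `I`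
is isomorphic, as a graded `R`-algebra, to `S/(w₀y − w₁x, w₀z² − w₂x², w₁z² − w₂xy)`
where `S = R[w₀,w₁,w₂]` (with `deg wᵢ = 1`), via `w₀ ↦ x²t, w₁ ↦ xyt, w₂ ↦ z²t`:
the surjection `ψ : S → R[t]` has image the Rees algebra, kernel `J`, and sends the
degree-`n` homogeneous component of `S` into `Iⁿ·tⁿ`. -/
theorem reesAlgebra_presentation_example
    (x y z : MvPolynomial (Fin 3) ℚ) (hx : x = X 0) (hy : y = X 1) (hz : z = X 2)
    (I : Ideal (MvPolynomial (Fin 3) ℚ))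
    (hI : I = Ideal.span {x ^ 2, x * y, z ^ 2})
    (J : Ideal (MvPolynomial (Fin 3) (MvPolynomial (Fin 3) ℚ)))
    (hJ : J = Ideal.span
      {C y * X 0 - C x * X 1,
       C (z ^ 2) * X 0 - C (x ^ 2) * X 2,
       C (z ^ 2) * X 1 - C (x * y) * X 2})
    (ψ : MvPolynomial (Fin 3) (MvPolynomial (Fin 3) ℚ) →ₐ[MvPolynomial (Fin 3) ℚ]
      Polynomial (MvPolynomial (Fin 3) ℚ))
    (hψ : ψ = aeval ![Polynomial.C (x ^ 2) * Polynomial.X,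
      Polynomial.C (x * y) * Polynomial.X, Polynomial.C (z ^ 2) * Polynomial.X]) :
    RingHom.ker (ψ : MvPolynomial (Fin 3) (MvPolynomial (Fin 3) ℚ) →+*
        Polynomial (MvPolynomial (Fin 3) ℚ)) = J ∧
    ψ.range = reesAlgebra I ∧
    (∀ (n : ℕ) (f : MvPolynomial (Fin 3) (MvPolynomial (Fin 3) ℚ)),
      f ∈ homogeneousSubmodule (Fin 3) (MvPolynomial (Fin 3) ℚ) n →
        ψ f ∈ Submodule.map (Polynomial.monomial n) (I ^ n)) ∧
    Nonempty ((MvPolynomial (Fin 3) (MvPolynomial (Fin 3) ℚ) ⧸ J)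
      ≃ₐ[MvPolynomial (Fin 3) ℚ] reesAlgebra I) := by
  exact reesAlgebra_presentation_example_general x y z hx hy hz I hI J hJ ψ hψ
end
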